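/- arXiv:2004.02370 — 4 statements merged into one kernel-verified Lean document; each statement's English description precedes it below -/
import Mathlib

section
/- Let C ⊆ {1,…,N} and T ≥ |C|. Suppose two radial grids on the same bus set {0,1,…,N} are given, with reduced incidence matrices A₁, A₂ and positive conductance vectors g₁, g₂, and set G_i := A_iᵀ diag(g_i) A_i for i = 1,2 (both G_i are invertible). Assume every leaf bus of each of the two trees belongs to C. If for some matrix Δ ∈ ℝ^{|C|×T} with rank(Δ) = |C| the noiseless probing data coincide, i.e., G₁⁻¹ I_C Δ = G₂⁻¹ I_C Δ, then G₁ = G₂. (In words: given noiseless probing data V = G⁻¹ I_C Δ with rank(Δ) = |C|, the matrix G is identifiable provided the grid is probed at all leaf buses.) -/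
/-!
Write `e_ℓ` for the edge of line `ℓ`. Removing `e_ℓ` from the tree splits it in two; the buses cut
off from the substation form the set *below* `ℓ`. Only line `ℓ` crosses the boundary of this set,
which gives an explicit inverse of `A` and hence
`(G⁻¹)_{mn} = ∑ 1 / g_ℓ`, summed over the lines `ℓ` that have both `m` and `n` below them
(`Gmat_inv`).

The sets below the lines form a laminar family (`below_laminar`), so `R := G⁻¹` is ultrametric:
`min (R m c) (R n c) ≤ R m n` for all `c` (`min_res_le`). Conversely, for every `n`
there is a leaf `c` that lies below all the lines over `n` (`exists_leaf`), and for it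
`R m n ≤ min (R m c) (R n c)`. Since all leaves are probed,
`R m n = max_{c ∈ C} min (R m c) (R n c)`, so the columns of `G⁻¹` indexed by `C` determine `G⁻¹`.
These columns are recovered from the data because `Δ` has full row rank.
-/

open Matrix BigOperators
open scoped Classical

/-- A radial grid: a tree on buses `{0,…,N}` with `N` lines, each line `ℓ`
having an ordered pair of endpoints (the first carrying `+1` in the incidence
matrix, the second `−1`). -/
structure RadialGrid (N : ℕ) where
  ep : Fin N → Fin (N + 1) × Fin (N + 1)
  ne : ∀ ℓ, (ep ℓ).1 ≠ (ep ℓ).2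
  inj : Function.Injective fun ℓ => s((ep ℓ).1, (ep ℓ).2)
  tree : (SimpleGraph.fromEdgeSet (Set.range fun ℓ => s((ep ℓ).1, (ep ℓ).2))).IsTree

namespace RadialGrid

variable {N : ℕ}

/-- The underlying tree graph. -/
def graph (T : RadialGrid N) : SimpleGraph (Fin (N + 1)) :=
  SimpleGraph.fromEdgeSet (Set.range fun ℓ => s((T.ep ℓ).1, (T.ep ℓ).2))

/-- A leaf bus: a non-substation bus of tree-degree one. -/
noncomputable def isLeaf (T : RadialGrid N) (n : Fin (N + 1)) : Prop :=
  n ≠ 0 ∧ (T.graph.neighborSet n).ncard = 1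

/-- The feeding path of bus `n`: the unique path from the substation `0` to `n`. -/
noncomputable def fpath (T : RadialGrid N) (n : Fin (N + 1)) : T.graph.Walk 0 n :=
  (T.tree.existsUnique_path 0 n).choose

/-- Line `ℓ` lies on the feeding path of bus `n`. -/
def onPath (T : RadialGrid N) (ℓ : Fin N) (n : Fin (N + 1)) : Prop :=
  s((T.ep ℓ).1, (T.ep ℓ).2) ∈ (T.fpath n).edges

/-- Bus `a` is an ancestor of bus `n`: `a` lies on the feeding path of `n`, `a ≠ n`. -/
def ancestor (T : RadialGrid N) (a n : Fin (N + 1)) : Prop :=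
  a ∈ (T.fpath n).support ∧ a ≠ n

/-- `R_{ab}` for buses `a b`: sum of resistances of lines on the intersection of
the feeding paths of `a` and `b`. -/
noncomputable def Rbus (T : RadialGrid N) (r : Fin N → ℝ) (a b : Fin (N + 1)) : ℝ :=
  ∑ ℓ : Fin N, if T.onPath ℓ a ∧ T.onPath ℓ b then r ℓ else 0

/-- The resistance matrix `R` on the non-substation buses `{1,…,N}`. -/
noncomputable def R (T : RadialGrid N) (r : Fin N → ℝ) (m n : Fin N) : ℝ :=
  T.Rbus r m.succ n.succ

/-- The reduced incidence matrix `A` (substation column deleted): row `ℓ` has `+1`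
at the first endpoint of line `ℓ` and `−1` at the second. -/
def A (T : RadialGrid N) : Matrix (Fin N) (Fin N) ℝ := fun ℓ i =>
  if i.succ = (T.ep ℓ).1 then 1 else if i.succ = (T.ep ℓ).2 then -1 else 0

/-- `G := Aᵀ diag(g) A` for a conductance vector `g`. -/
noncomputable def Gmat (T : RadialGrid N) (g : Fin N → ℝ) : Matrix (Fin N) (Fin N) ℝ :=
  T.Aᵀ * Matrix.diagonal g * T.A

end RadialGrid

/-- `I_C`: the `N × |C|` matrix collecting the columns of the identity indexed by `C`. -/
def IC {N : ℕ} (C : Finset (Fin N)) : Matrix (Fin N) ↥C ℝ := fun n c =>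
  if n = (c : Fin N) then 1 else 0

/-- The Khatri-Rao (column-wise Kronecker) product. -/
def khatriRao {m n L : Type*} (Z : Matrix m L ℝ) (X : Matrix n L ℝ) :
    Matrix (m × n) L ℝ := fun p ℓ => Z p.1 ℓ * X p.2 ℓ

/-- Column-stacking vectorization: entry `(t,i)` of `vec P` is `P i t`. -/
def vec {n t : Type*} (P : Matrix n t ℝ) : t × n → ℝ := fun p => P p.2 p.1

namespace RadialGrid

variable {N : ℕ}

/-! ### The buses below a line -/

/-- Bus `v` is below line `ℓ`: deleting `ℓ` disconnects `v` from the substation. -/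
def below (T : RadialGrid N) (ℓ : Fin N) (v : Fin (N + 1)) : Prop :=
  ¬ (T.graph.deleteEdges {s((T.ep ℓ).1, (T.ep ℓ).2)}).Reachable 0 v

lemma graph_isTree (T : RadialGrid N) : T.graph.IsTree := T.tree

lemma adj_iff (T : RadialGrid N) {u v : Fin (N + 1)} :
    T.graph.Adj u v ↔ ∃ ℓ, s((T.ep ℓ).1, (T.ep ℓ).2) = s(u, v) := by
  unfold graph
  rw [SimpleGraph.fromEdgeSet_adj]
  constructor
  · rintro ⟨⟨ℓ, h⟩, -⟩
    exact ⟨ℓ, h⟩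
  · rintro ⟨ℓ, h⟩
    refine ⟨⟨ℓ, h⟩, ?_⟩
    rintro rfl
    have := T.ne ℓ
    simp only [Sym2.eq_iff] at h
    rcases h with h | h <;> exact this (h.1.trans h.2.symm)

lemma adj_ep (T : RadialGrid N) (ℓ : Fin N) : T.graph.Adj (T.ep ℓ).1 (T.ep ℓ).2 :=
  T.adj_iff.2 ⟨ℓ, rfl⟩

/-- By connectedness, a property of buses that no line changes is constant. -/
lemma const_of_lines (T : RadialGrid N) {P : Fin (N + 1) → Prop}
    (hP : ∀ ℓ, P (T.ep ℓ).1 ↔ P (T.ep ℓ).2) {u v : Fin (N + 1)} (hu : P u) : P v := by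
  obtain ⟨w⟩ := T.graph_isTree.connected.preconnected u v
  induction w with
  | nil => exact hu
  | cons hadj _ ih =>
    apply ih
    obtain ⟨ℓ, h⟩ := T.adj_iff.1 hadj
    have := hP ℓ
    simp only [Sym2.eq_iff] at h
    rcases h with ⟨rfl, rfl⟩ | ⟨rfl, rfl⟩
    · exact this.1 hu
    · exact this.2 hu

lemma not_below_zero (T : RadialGrid N) (ℓ : Fin N) : ¬ T.below ℓ 0 :=
  fun h => h (SimpleGraph.Reachable.refl _)

lemma below_ep_iff (T : RadialGrid N) {ℓ k : Fin N} (hk : k ≠ ℓ) :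
    T.below ℓ (T.ep k).1 ↔ T.below ℓ (T.ep k).2 := by
  have hadj : (T.graph.deleteEdges {s((T.ep ℓ).1, (T.ep ℓ).2)}).Adj (T.ep k).1 (T.ep k).2 := by
    rw [SimpleGraph.deleteEdges_adj]
    exact ⟨T.adj_ep k, fun h => hk (T.inj h)⟩
  exact not_congr ⟨fun h => h.trans hadj.reachable, fun h => h.trans hadj.symm.reachable⟩

/-- Line `ℓ` crosses the boundary of the set below it: its endpoints are not both above because
`ℓ` is a bridge, and not both below because the tree is connected. -/
lemma below_ep_self (T : RadialGrid N) (ℓ : Fin N) :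
    T.below ℓ (T.ep ℓ).1 ↔ ¬ T.below ℓ (T.ep ℓ).2 := by
  constructor
  · intro h1 h2
    refine T.const_of_lines (P := fun v => ¬ T.below ℓ v) (u := 0) (v := (T.ep ℓ).1) ?_
      (T.not_below_zero ℓ) h1
    intro k
    by_cases hk : k = ℓ
    · subst hk; tauto
    · exact not_congr (T.below_ep_iff hk)
  · intro h2 h1
    have hb := SimpleGraph.isAcyclic_iff_forall_adj_isBridge.1 T.graph_isTree.isAcyclic
      (T.adj_ep ℓ)
    rw [SimpleGraph.isBridge_iff] at hb
    exact hb (h1.symm.trans (not_not.1 h2))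

/-- Two sets below lines are nested or disjoint. Otherwise all four regions cut out by the two
sets are nonempty, and two lines cannot connect four regions. -/
lemma below_laminar (T : RadialGrid N) {ℓ k : Fin N} {c m n : Fin (N + 1)}
    (hc : T.below ℓ c) (hc' : T.below k c) (hm : T.below ℓ m) (hm' : ¬ T.below k m)
    (hn : T.below k n) (hn' : ¬ T.below ℓ n) : False := by
  have hne : ℓ ≠ k := by rintro rfl; exact hm' hm
  have hl := T.below_ep_iff hne
  have hk := T.below_ep_iff hne.symm
  have h0 := T.not_below_zero ℓ
  have h0' := T.not_below_zero k
  -- A union of regions that neither `ℓ` nor `k` leaves is empty or everything.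
  have key : ∀ P : Fin (N + 1) → Prop, (∀ u v, (T.below ℓ u ↔ T.below ℓ v) →
      (T.below k u ↔ T.below k v) → (P u ↔ P v)) → (P (T.ep ℓ).1 ↔ P (T.ep ℓ).2) →
      (P (T.ep k).1 ↔ P (T.ep k).2) → ∀ u v, P u → P v := by
    intro P hP h1 h2 u v
    refine T.const_of_lines fun j => ?_
    by_cases hj : j = ℓ
    · subst hj; exact h1
    by_cases hj' : j = k
    · subst hj'; exact h2
    exact hP _ _ (T.below_ep_iff hj) (T.below_ep_iff hj')
  by_cases a : T.below k (T.ep ℓ).1 <;> by_cases b : T.below ℓ (T.ep k).1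
  · have := key (fun v => ¬ T.below ℓ v ∧ ¬ T.below k v) (by intros; tauto) (by tauto)
      (by tauto) 0 m
    tauto
  · have := key (fun v => T.below ℓ v ∧ ¬ T.below k v) (by intros; tauto) (by tauto)
      (by tauto) m 0
    tauto
  · have := key (fun v => ¬ T.below ℓ v ∧ T.below k v) (by intros; tauto) (by tauto)
      (by tauto) n 0
    tauto
  · have := key (fun v => T.below ℓ v ∧ T.below k v) (by intros; tauto) (by tauto)
      (by tauto) c 0
    tauto

lemma below_adj_iff (T : RadialGrid N) {ℓ k : Fin N} {u v : Fin (N + 1)}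
    (he : s((T.ep k).1, (T.ep k).2) = s(u, v)) (hk : k ≠ ℓ) :
    T.below ℓ u ↔ T.below ℓ v := by
  have := T.below_ep_iff hk
  simp only [Sym2.eq_iff] at he
  rcases he with ⟨rfl, rfl⟩ | ⟨rfl, rfl⟩
  · exact this
  · exact this.symm

lemma below_adj_self (T : RadialGrid N) {ℓ : Fin N} {u v : Fin (N + 1)}
    (he : s((T.ep ℓ).1, (T.ep ℓ).2) = s(u, v)) :
    T.below ℓ u ↔ ¬ T.below ℓ v := by
  have := T.below_ep_self ℓ
  simp only [Sym2.eq_iff] at he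
  rcases he with ⟨rfl, rfl⟩ | ⟨rfl, rfl⟩ <;> tauto

/-! ### Leaf descendants -/

/-- Every bus `n ≠ 0` has a leaf descendant: a leaf below every line that `n` is below. It is a
bus of maximal depth among the descendants of `n`. -/
lemma exists_leaf (T : RadialGrid N) (n : Fin N) :
    ∃ c : Fin N, T.isLeaf c.succ ∧ ∀ ℓ, T.below ℓ n.succ → T.below ℓ c.succ := by
  let S : Fin (N + 1) → Finset (Fin N) := fun v => Finset.univ.filter fun ℓ => T.below ℓ v
  have hS : ∀ v ℓ, ℓ ∈ S v ↔ T.below ℓ v := fun v ℓ => by simp [S]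
  obtain ⟨v, hv, hmax⟩ := Finset.exists_max_image
    (Finset.univ.filter fun v : Fin (N + 1) => v ≠ 0 ∧ S n.succ ⊆ S v) (fun v => (S v).card)
    ⟨n.succ, by simp⟩
  simp only [Finset.mem_filter, Finset.mem_univ, true_and] at hv hmax
  obtain ⟨hv0, hnv⟩ := hv
  -- A line at `v` that `v` is not below would lead to a strictly deeper descendant.
  have hup : ∀ w ℓ, s((T.ep ℓ).1, (T.ep ℓ).2) = s(v, w) → T.below ℓ v := by
    intro w ℓ he
    by_contra hvl
    have hwl : T.below ℓ w := by
      have := T.below_adj_self he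
      tauto
    have hsub : S v ⊆ S w := by
      intro k hk
      rw [hS] at hk ⊢
      have hkl : ℓ ≠ k := by rintro rfl; exact hvl hk
      exact (T.below_adj_iff he hkl).1 hk
    have hlt : (S v).card < (S w).card :=
      Finset.card_lt_card ⟨hsub, fun h => hvl ((hS _ _).1 (h ((hS _ _).2 hwl)))⟩
    have hw0 : w ≠ 0 := by rintro rfl; exact T.not_below_zero ℓ hwl
    exact absurd (hmax w ⟨hw0, hnv.trans hsub⟩) (not_le.2 hlt)
  have hleaf : T.isLeaf v := by
    refine ⟨hv0, Set.ncard_eq_one.2 ?_⟩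
    have : Nontrivial (Fin (N + 1)) := ⟨v, 0, hv0⟩
    obtain ⟨w, hw⟩ := T.graph_isTree.connected.preconnected.exists_adj_of_nontrivial v
    refine ⟨w, Set.eq_singleton_iff_unique_mem.2 ⟨hw, fun w' hw' => ?_⟩⟩
    obtain ⟨ℓ, he⟩ := T.adj_iff.1 hw
    obtain ⟨k, hf⟩ := T.adj_iff.1 hw'
    have h1 := hup _ _ he
    have h2 := hup _ _ hf
    by_cases hlk : ℓ = k
    · subst hlk
      exact (Sym2.congr_right.1 (he.symm.trans hf)).symm
    · exact (T.below_laminar h1 h2 ((T.below_adj_iff hf (Ne.symm hlk)).1 h1)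
        ((T.below_adj_self hf).1 h2) ((T.below_adj_iff he hlk).1 h2)
        ((T.below_adj_self he).1 h1)).elim
  obtain ⟨c, rfl⟩ := Fin.exists_succ_eq.2 hv0
  exact ⟨c, hleaf, fun ℓ h => (hS _ _).1 (hnv ((hS _ _).2 h))⟩

/-! ### The resistance ultrametric -/

/-- The total resistance of the lines that have both `m` and `n` below them. -/
noncomputable def res (T : RadialGrid N) (g : Fin N → ℝ) (m n : Fin N) : ℝ :=
  ∑ ℓ, if T.below ℓ m.succ ∧ T.below ℓ n.succ then (g ℓ)⁻¹ else 0

lemma res_le (T : RadialGrid N) {g : Fin N → ℝ} (hg : ∀ ℓ, 0 < g ℓ) {m n m' n' : Fin N}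
    (h : ∀ ℓ, T.below ℓ m.succ → T.below ℓ n.succ →
      T.below ℓ m'.succ ∧ T.below ℓ n'.succ) :
    T.res g m n ≤ T.res g m' n' := by
  refine Finset.sum_le_sum fun ℓ _ => ?_
  have := (inv_pos.2 (hg ℓ)).le
  by_cases h1 : T.below ℓ m.succ ∧ T.below ℓ n.succ
  · rw [if_pos h1, if_pos (h ℓ h1.1 h1.2)]
  · rw [if_neg h1]
    split_ifs
    · exact this
    · exact le_rfl

lemma min_res_le (T : RadialGrid N) {g : Fin N → ℝ} (hg : ∀ ℓ, 0 < g ℓ) (m n c : Fin N) :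
    min (T.res g m c) (T.res g n c) ≤ T.res g m n := by
  by_cases h : ∀ ℓ, T.below ℓ m.succ → T.below ℓ c.succ → T.below ℓ n.succ
  · exact (min_le_left _ _).trans (T.res_le hg fun ℓ h1 h2 => ⟨h1, h ℓ h1 h2⟩)
  · push Not at h
    obtain ⟨ℓ, hm, hc, hn⟩ := h
    refine (min_le_right _ _).trans (T.res_le hg fun k h1 h2 => ⟨?_, h1⟩)
    by_contra h3
    exact T.below_laminar hc h2 hm h3 h1 hn

/-! ### The inverse of `G` -/

/-- The signed path matrix, inverse to `A`: its entry at `(n, ℓ)` is nonzero iff `n` is below `ℓ`,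
and is then `+1` or `-1` according to which endpoint of `ℓ` is the lower one. -/
noncomputable def pathMat (T : RadialGrid N) : Matrix (Fin N) (Fin N) ℝ := fun n ℓ =>
  if T.below ℓ n.succ then (if T.below ℓ (T.ep ℓ).1 then 1 else -1) else 0

lemma sum_A_mul (T : RadialGrid N) (ℓ : Fin N) (f : Fin (N + 1) → ℝ) (hf : f 0 = 0) :
    ∑ i, T.A ℓ i * f i.succ = f (T.ep ℓ).1 - f (T.ep ℓ).2 := by
  have h1 : ∀ i : Fin N, T.A ℓ i * f i.succ =
      (fun j : Fin (N + 1) => (if j = (T.ep ℓ).1 then f j else 0) -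
        (if j = (T.ep ℓ).2 then f j else 0)) i.succ := by
    intro i
    have := T.ne ℓ
    unfold A
    by_cases a : i.succ = (T.ep ℓ).1
    · have b : i.succ ≠ (T.ep ℓ).2 := by rw [a]; exact this
      simp only [if_pos a, if_neg b]; ring
    · by_cases b : i.succ = (T.ep ℓ).2
      · simp only [if_neg a, if_pos b]; ring
      · simp only [if_neg a, if_neg b]; ring
  have h2 := Fin.sum_univ_succ (fun j : Fin (N + 1) => (if j = (T.ep ℓ).1 then f j else 0) -
        (if j = (T.ep ℓ).2 then f j else 0))
  rw [Finset.sum_congr rfl fun i _ => h1 i]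
  simp only [hf, ite_self, sub_zero, zero_add] at h2
  rw [← h2, Finset.sum_sub_distrib]
  simp

lemma A_mul_pathMat (T : RadialGrid N) : T.A * T.pathMat = 1 := by
  ext ℓ k
  rw [Matrix.mul_apply]
  have h := T.sum_A_mul ℓ (fun v => if T.below k v then
    (if T.below k (T.ep k).1 then (1 : ℝ) else -1) else 0) (if_neg (T.not_below_zero k))
  refine Eq.trans h ?_
  by_cases hlk : ℓ = k
  · subst hlk
    have := T.below_ep_self ℓ
    by_cases a : T.below ℓ (T.ep ℓ).1
    · have b := this.1 a
      simp [a, b]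
    · have b : T.below ℓ (T.ep ℓ).2 := by tauto
      simp [a, b]
  · have := T.below_ep_iff hlk
    rw [Matrix.one_apply_ne hlk]
    simp only [this, sub_self]

lemma Gmat_mul (T : RadialGrid N) {g : Fin N → ℝ} (hg : ∀ ℓ, 0 < g ℓ) :
    T.Gmat g * (T.pathMat * Matrix.diagonal (fun ℓ => (g ℓ)⁻¹) * T.pathMatᵀ) = 1 := by
  have hd : Matrix.diagonal g * Matrix.diagonal (fun ℓ => (g ℓ)⁻¹) = 1 := by
    rw [Matrix.diagonal_mul_diagonal, ← Matrix.diagonal_one]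
    congr 1
    funext ℓ
    exact mul_inv_cancel₀ (hg ℓ).ne'
  have hX : T.Aᵀ * T.pathMatᵀ = 1 := by
    rw [← Matrix.transpose_mul, mul_eq_one_comm.1 T.A_mul_pathMat, Matrix.transpose_one]
  calc T.Gmat g * (T.pathMat * Matrix.diagonal (fun ℓ => (g ℓ)⁻¹) * T.pathMatᵀ)
      = T.Aᵀ * (Matrix.diagonal g * ((T.A * T.pathMat) *
          Matrix.diagonal (fun ℓ => (g ℓ)⁻¹))) * T.pathMatᵀ := by
        simp only [Gmat, Matrix.mul_assoc]
    _ = 1 := by rw [T.A_mul_pathMat, Matrix.one_mul, hd, Matrix.mul_one, hX]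

lemma Gmat_inv (T : RadialGrid N) {g : Fin N → ℝ} (hg : ∀ ℓ, 0 < g ℓ) (m n : Fin N) :
    (T.Gmat g)⁻¹ m n = T.res g m n := by
  rw [Matrix.inv_eq_right_inv (T.Gmat_mul hg), Matrix.mul_apply]
  refine Finset.sum_congr rfl fun ℓ _ => ?_
  rw [Matrix.mul_diagonal, Matrix.transpose_apply]
  unfold pathMat
  by_cases a : T.below ℓ m.succ <;> by_cases b : T.below ℓ n.succ <;>
    by_cases d : T.below ℓ (T.ep ℓ).1 <;> simp [a, b, d]

lemma isUnit_det_Gmat (T : RadialGrid N) {g : Fin N → ℝ} (hg : ∀ ℓ, 0 < g ℓ) :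
    IsUnit (T.Gmat g).det :=
  Matrix.isUnit_det_of_right_inverse (T.Gmat_mul hg)

/-! ### Identifiability -/

/-- Comparison through a leaf descendant `c` of `n` in the first grid and the ultrametric
inequality in the second; exchanging the grids gives equality. -/
lemma res_le_res {C : Finset (Fin N)} (T₁ T₂ : RadialGrid N) {g₁ g₂ : Fin N → ℝ}
    (hg₁ : ∀ ℓ, 0 < g₁ ℓ) (hg₂ : ∀ ℓ, 0 < g₂ ℓ)
    (hleaf : ∀ n : Fin N, T₁.isLeaf n.succ → n ∈ C)
    (h : ∀ n, ∀ c ∈ C, T₁.res g₁ n c = T₂.res g₂ n c) (m n : Fin N) :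
    T₁.res g₁ m n ≤ T₂.res g₂ m n := by
  obtain ⟨c, hc, hnc⟩ := T₁.exists_leaf n
  have hcC := hleaf c hc
  calc T₁.res g₁ m n ≤ min (T₁.res g₁ m c) (T₁.res g₁ n c) :=
        le_min (T₁.res_le hg₁ fun ℓ h1 h2 => ⟨h1, hnc ℓ h2⟩)
          (T₁.res_le hg₁ fun ℓ _ h2 => ⟨h2, hnc ℓ h2⟩)
    _ = min (T₂.res g₂ m c) (T₂.res g₂ n c) := by rw [h m c hcC, h n c hcC]
    _ ≤ T₂.res g₂ m n := T₂.min_res_le hg₂ m n c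

end RadialGrid

lemma mul_IC_apply {N : ℕ} (C : Finset (Fin N)) (M : Matrix (Fin N) (Fin N) ℝ) (n : Fin N)
    (c : ↥C) : (M * IC C) n c = M n c := by
  simp [Matrix.mul_apply, IC]

/-- A matrix of full row rank can be cancelled on the right. -/
lemma mul_right_cancel_of_rank {N T : ℕ} {C : Finset (Fin N)} {Δ : Matrix ↥C (Fin T) ℝ}
    (hΔ : Δ.rank = C.card) {P Q : Matrix (Fin N) ↥C ℝ} (h : P * Δ = Q * Δ) : P = Q := by
  have hli : LinearIndependent ℝ Δ.row := by
    rw [linearIndependent_iff_card_eq_finrank_span, Set.finrank,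
      ← Matrix.rank_eq_finrank_span_row, hΔ, Fintype.card_coe]
  have hinj := Matrix.vecMul_injective_iff.2 hli
  funext n
  apply hinj
  have := congrFun h n
  rwa [Matrix.mul_apply_eq_vecMul, Matrix.mul_apply_eq_vecMul] at this

/-- Under noiseless probing data `V = G⁻¹ I_C Δ` with
`rank(Δ) = |C|`, the matrix `G` is identifiable provided all leaf buses are probed. -/
theorem topology_identifiability
    {N T : ℕ} (hN : 1 ≤ N) (C : Finset (Fin N)) (hT : C.card ≤ T)
    (Γ₁ Γ₂ : RadialGrid N) (g₁ g₂ : Fin N → ℝ)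
    (hg₁ : ∀ ℓ, 0 < g₁ ℓ) (hg₂ : ∀ ℓ, 0 < g₂ ℓ)
    (hleaf₁ : ∀ n : Fin N, Γ₁.isLeaf n.succ → n ∈ C)
    (hleaf₂ : ∀ n : Fin N, Γ₂.isLeaf n.succ → n ∈ C)
    (Δ : Matrix ↥C (Fin T) ℝ) (hΔ : Δ.rank = C.card)
    (h : (Γ₁.Gmat g₁)⁻¹ * IC C * Δ = (Γ₂.Gmat g₂)⁻¹ * IC C * Δ) :
    Γ₁.Gmat g₁ = Γ₂.Gmat g₂ := by
  have hcols := mul_right_cancel_of_rank hΔ h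
  have hres : ∀ n, ∀ c ∈ C, Γ₁.res g₁ n c = Γ₂.res g₂ n c := by
    intro n c hc
    have := congrFun (congrFun hcols n) ⟨c, hc⟩
    rwa [mul_IC_apply, mul_IC_apply, Γ₁.Gmat_inv hg₁, Γ₂.Gmat_inv hg₂] at this
  have hinv : (Γ₁.Gmat g₁)⁻¹ = (Γ₂.Gmat g₂)⁻¹ := by
    ext m n
    rw [Γ₁.Gmat_inv hg₁, Γ₂.Gmat_inv hg₂]
    exact le_antisymm (Γ₁.res_le_res Γ₂ hg₁ hg₂ hleaf₁ hres m n)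
      (Γ₂.res_le_res Γ₁ hg₂ hg₁ hleaf₂ (fun n c hc => (hres n c hc).symm) m n)
  rw [← Matrix.nonsing_inv_nonsing_inv _ (Γ₁.isUnit_det_Gmat hg₁), hinv,
    Matrix.nonsing_inv_nonsing_inv _ (Γ₂.isUnit_det_Gmat hg₂)]
end

section
/- Consider a tree on the bus set {0,1,…,N} rooted at the substation bus 0 with line resistances r_ℓ > 0, and let C ⊆ {1,…,N} contain all leaf buses of the tree. Then the map from {1,…,N} to ℝ^{|C|} sending bus n to the vector (R_{n,c})_{c∈C} is injective; equivalently, the matrix R_C := R I_C has pairwise distinct rows. -/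
/-!
Write `d(n) = R_{nn}` for the resistance of the feeding path of `n`. Then `R_{ab} ≤ d(a)`, with
equality exactly when the feeding path of `a` is contained in that of `b`. Every bus `n ≠ 0` lies
on the feeding path of some leaf `c` (`exists_leaf`: take a deepest bus downstream of `n`), and
`c ∈ C`.

If rows `m` and `n` agree, evaluating them at a leaf downstream of `n` gives
`d(n) = R_{nc} = R_{mc} ≤ d(m)`; by symmetry `d(m) = d(n)`, so `R_{mc} = d(m)` and `m` lies on the
feeding path of `c`, as does `n`. Two buses on one feeding path are comparable, and `d` increases
strictly downstream (`Rbus_self_lt`), hence `m = n`.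
-/

open Matrix BigOperators
open scoped Classical

namespace RadialGrid

variable {N : ℕ} (T : RadialGrid N)

lemma fpath_isPath (n : Fin (N + 1)) : (T.fpath n).IsPath :=
  (T.tree.existsUnique_path 0 n).choose_spec.1

lemma eq_fpath {n : Fin (N + 1)} (p : T.graph.Walk 0 n) (hp : p.IsPath) : p = T.fpath n :=
  (T.tree.existsUnique_path 0 n).choose_spec.2 p hp

lemma takeUntil_fpath {a n : Fin (N + 1)} (h : a ∈ (T.fpath n).support) :
    (T.fpath n).takeUntil a h = T.fpath a :=
  T.eq_fpath _ ((T.fpath_isPath n).takeUntil h)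

lemma fpath_length_lt {a n : Fin (N + 1)} (h : a ∈ (T.fpath n).support) (hne : a ≠ n) :
    (T.fpath a).length < (T.fpath n).length := by
  rw [← T.takeUntil_fpath h]
  exact SimpleGraph.Walk.length_takeUntil_lt_length h hne

lemma onPath_of_mem_support {a n : Fin (N + 1)} (h : a ∈ (T.fpath n).support) {ℓ : Fin N}
    (hℓ : T.onPath ℓ a) : T.onPath ℓ n := by
  unfold onPath at *
  rw [← T.takeUntil_fpath h] at hℓ
  exact (T.fpath n).edges_takeUntil_subset_edges h hℓ

lemma support_fpath_prefix {a n : Fin (N + 1)} (h : a ∈ (T.fpath n).support) :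
    (T.fpath a).support <+: (T.fpath n).support := by
  rw [← T.takeUntil_fpath h]
  exact (T.fpath n).support_takeUntil_prefix_support h

/-- Every bus other than the substation has a line feeding it: the last line of its feeding
path. A feeding path containing that line passes through the bus. -/
lemma exists_last_line {n : Fin (N + 1)} (hn : n ≠ 0) :
    ∃ ℓ, T.onPath ℓ n ∧ ∀ b, T.onPath ℓ b → n ∈ (T.fpath b).support := by
  have hnil : ¬ (T.fpath n).Nil := SimpleGraph.Walk.not_nil_of_ne hn.symm
  have hmem := SimpleGraph.Walk.mk_penultimate_end_mem_edges hnil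
  have hE := (T.fpath n).edges_subset_edgeSet hmem
  have hR : s((T.fpath n).penultimate, n) ∈
      Set.range fun ℓ => s((T.ep ℓ).1, (T.ep ℓ).2) := by
    unfold graph at hE
    rw [SimpleGraph.edgeSet_fromEdgeSet] at hE
    exact hE.1
  obtain ⟨ℓ, hℓ⟩ := hR
  have hℓ' : s((T.ep ℓ).1, (T.ep ℓ).2) = s((T.fpath n).penultimate, n) := hℓ
  refine ⟨ℓ, ?_, fun b hb => ?_⟩
  · rw [onPath, hℓ']; exact hmem
  · rw [onPath, hℓ'] at hb
    exact SimpleGraph.Walk.snd_mem_support_of_mem_edges _ hb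

/-- Among the buses downstream of `n`, one with a longest feeding path is a leaf: a second
neighbour would either extend the path or close a cycle. -/
lemma exists_leaf_s3 {n : Fin (N + 1)} (hn : n ≠ 0) :
    ∃ c, T.isLeaf c ∧ n ∈ (T.fpath c).support := by
  obtain ⟨c, hc, hmax⟩ := Finset.exists_max_image
    (Finset.univ.filter fun c => n ∈ (T.fpath c).support) (fun c => (T.fpath c).length)
    ⟨n, by simp⟩
  simp only [Finset.mem_filter, Finset.mem_univ, true_and] at hc hmax
  have hc0 : c ≠ 0 := by
    rintro rfl
    rw [← T.eq_fpath .nil .nil] at hc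
    simp at hc
    exact hn hc
  refine ⟨c, ⟨hc0, ?_⟩, hc⟩
  have hnil : ¬ (T.fpath c).Nil := SimpleGraph.Walk.not_nil_of_ne hc0.symm
  rw [Set.ncard_eq_one]
  refine ⟨(T.fpath c).penultimate, Set.Subset.antisymm (fun w hw => ?_) ?_⟩
  · have hadj : T.graph.Adj c w := hw
    by_cases hs : w ∈ (T.fpath c).support
    · have hac : T.graph.IsAcyclic := T.tree.isAcyclic
      exact hac.eq_penultimate_of_adj_end (T.fpath_isPath c) hadj hs
    · exfalso
      have hq := T.eq_fpath _ ((T.fpath_isPath c).concat hs hadj)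
      have h1 := hmax w (by
        rw [← hq]
        exact SimpleGraph.Walk.support_subset_support_concat _ _ hc)
      rw [← hq, SimpleGraph.Walk.length_concat] at h1
      omega
  · rintro _ rfl
    exact (SimpleGraph.Walk.adj_penultimate hnil).symm

variable {r : Fin N → ℝ}

lemma Rbus_eq_self {a b : Fin (N + 1)} (h : a ∈ (T.fpath b).support) :
    T.Rbus r a b = T.Rbus r a a := by
  refine Finset.sum_congr rfl fun ℓ _ => ?_
  have := fun hℓ => T.onPath_of_mem_support h (ℓ := ℓ) hℓ
  simp only [and_self]
  congr 1
  exact propext ⟨fun x => x.1, fun x => ⟨x, this x⟩⟩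

lemma Rbus_le_self (hr : ∀ ℓ, 0 < r ℓ) (a b : Fin (N + 1)) :
    T.Rbus r a b ≤ T.Rbus r a a := by
  refine Finset.sum_le_sum fun ℓ _ => ?_
  have := (hr ℓ).le
  split_ifs <;> first | linarith | tauto

/-- If `a` is not on the feeding path of `b`, the line feeding `a` is missing from `R_{ab}`. -/
lemma Rbus_lt_self (hr : ∀ ℓ, 0 < r ℓ) {a b : Fin (N + 1)} (ha : a ≠ 0)
    (h : a ∉ (T.fpath b).support) : T.Rbus r a b < T.Rbus r a a := by
  obtain ⟨ℓ₀, h₀, h₁⟩ := T.exists_last_line ha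
  refine Finset.sum_lt_sum (fun ℓ _ => ?_) ⟨ℓ₀, Finset.mem_univ _, ?_⟩
  · have := (hr ℓ).le
    split_ifs <;> first | linarith | tauto
  · rw [if_neg fun x => h (h₁ b x.2), if_pos ⟨h₀, h₀⟩]
    exact hr ℓ₀

lemma Rbus_comm (a b : Fin (N + 1)) : T.Rbus r a b = T.Rbus r b a := by
  simp only [Rbus, and_comm]

/-- The resistance of the feeding path increases strictly downstream. -/
lemma Rbus_self_lt (hr : ∀ ℓ, 0 < r ℓ) {a b : Fin (N + 1)} (hb : b ≠ 0)
    (h : a ∈ (T.fpath b).support) (hne : a ≠ b) : T.Rbus r a a < T.Rbus r b b := by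
  rw [← T.Rbus_eq_self h, T.Rbus_comm]
  refine T.Rbus_lt_self hr hb fun h' => ?_
  have h1 := T.fpath_length_lt h hne
  have h2 := T.fpath_length_lt h' hne.symm
  omega

end RadialGrid

/-- If `C` contains all leaf buses, the matrix `R_C = R I_C`
has pairwise distinct rows. -/
theorem RC_distinct_rows
    {N : ℕ} (hN : 1 ≤ N) (Γ : RadialGrid N) (r : Fin N → ℝ) (hr : ∀ ℓ, 0 < r ℓ)
    (C : Finset (Fin N)) (hleaf : ∀ n : Fin N, Γ.isLeaf n.succ → n ∈ C) :
    Function.Injective fun n : Fin N => fun c : ↥C => Γ.R r n (c : Fin N) := by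
  intro m n hmn
  have key : ∀ c, Γ.isLeaf c → Γ.Rbus r m.succ c = Γ.Rbus r n.succ c := by
    intro c hc
    obtain ⟨c', rfl⟩ := Fin.exists_succ_eq.mpr hc.1
    exact congrFun hmn ⟨c', hleaf c' hc⟩
  have hm := Fin.succ_ne_zero m
  have hn := Fin.succ_ne_zero n
  obtain ⟨c, hc, hnc⟩ := Γ.exists_leaf_s3 hn
  obtain ⟨c', hc', hmc'⟩ := Γ.exists_leaf_s3 hm
  have h1 := key c hc
  have h2 := key c' hc'
  rw [Γ.Rbus_eq_self hnc] at h1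
  rw [Γ.Rbus_eq_self hmc'] at h2
  have h3 := Γ.Rbus_le_self hr m.succ c
  have h4 := Γ.Rbus_le_self hr n.succ c'
  have hmc : m.succ ∈ (Γ.fpath c).support := by
    by_contra h
    have := Γ.Rbus_lt_self hr hm h
    linarith
  by_contra hne
  have hne' : m.succ ≠ n.succ := fun h => hne (Fin.succ_injective _ h)
  -- Both feeding paths are initial segments of that of `c`, so one extends the other.
  rcases List.prefix_or_prefix_of_prefix (Γ.support_fpath_prefix hmc)
    (Γ.support_fpath_prefix hnc) with h | h
  · have := Γ.Rbus_self_lt hr hn (h.subset (Γ.fpath m.succ).end_mem_support) hne'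
    linarith
  · have := Γ.Rbus_self_lt hr hm (h.subset (Γ.fpath n.succ).end_mem_support) hne'.symm
    linarith
end

section
/- Let α > 0, let H̄ ∈ ℝ^{M×L̄}, and let S ∈ {0,1}^{N×L̄} be a selection matrix with pairwise distinct rows, so that S Sᵀ = I_N and SᵀS = diag(b) for the 0/1 indicator vector b of selected columns. Set H := H̄ Sᵀ and C := (α⁻¹ H̄ᵀH̄ + I_{L̄})⁻¹. If the matrix C − diag(b) is invertible, then HᵀH is invertible and (HᵀH)⁻¹ = −α⁻¹ I_N − α⁻¹ S (C − diag(b))⁻¹ Sᵀ. -/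
/-!
Write `P = α⁻¹ H̄ᵀH̄ + 1`, which is positive definite and hence invertible with inverse `C`, and let
`X = (C - SᵀS)⁻¹`. Since `S Sᵀ = 1`, one has `HᵀH = α (S P Sᵀ - 1)`. Multiplying
`(C - SᵀS) X = 1` by `P` on the left gives `P SᵀS X = X - P`, so expanding
`(S P Sᵀ - 1) (-1 - S X Sᵀ)` leaves exactly the identity. A one-sided inverse of a square matrix
is two-sided, which gives both invertibility and the formula.
-/

open Matrix BigOperators
open scoped Classical

/-- Distinct rows of a selection matrix are orthonormal: row `i` is the indicator of a single
column, and two rows selecting the same column would coincide. -/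
theorem selection_mul_transpose {L N : ℕ} (S : Matrix (Fin N) (Fin L) ℝ)
    (hS01 : ∀ i j, S i j = 0 ∨ S i j = 1)
    (hSrow : ∀ i, ∃! j, S i j = 1)
    (hSdist : Function.Injective fun i => S i) : S * Sᵀ = 1 := by
  choose c hc hu using hSrow
  have hS : ∀ i j, S i j = if j = c i then 1 else 0 := by
    intro i j
    split_ifs with h
    · rw [h]; exact hc i
    · exact (hS01 i j).resolve_right fun h1 => h (hu i j h1)
  have hcinj : Function.Injective c := by
    intro i k h
    apply hSdist
    funext j
    simp only [hS, h]
  ext i k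
  simp [Matrix.mul_apply, hS, Matrix.one_apply, hcinj.eq_iff, eq_comm]

/-- The algebraic core, for an arbitrary invertible `P` and an arbitrary rectangular `S`. -/
theorem compress_sub_one_mul {L N : ℕ} (P : Matrix (Fin L) (Fin L) ℝ)
    (S : Matrix (Fin N) (Fin L) ℝ) (hP : IsUnit P)
    (hD : IsUnit (P⁻¹ - Sᵀ * S)) :
    (S * P * Sᵀ - 1) * (-1 - S * (P⁻¹ - Sᵀ * S)⁻¹ * Sᵀ) = 1 := by
  have hX := Matrix.mul_nonsing_inv _ ((Matrix.isUnit_iff_isUnit_det _).1 hD)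
  have hPC := Matrix.mul_nonsing_inv _ ((Matrix.isUnit_iff_isUnit_det _).1 hP)
  generalize (P⁻¹ - Sᵀ * S)⁻¹ = X at hX ⊢
  have key : P * (Sᵀ * S * X) = X - P := by
    have h := congrArg (P * ·) hX
    simp only [Matrix.sub_mul, Matrix.mul_sub, ← Matrix.mul_assoc, hPC, Matrix.one_mul,
      Matrix.mul_one] at h
    rw [← Matrix.mul_assoc, ← Matrix.mul_assoc, eq_sub_iff_add_eq, add_comm]
    exact (sub_eq_iff_eq_add.1 h).symm
  have h2 : S * P * Sᵀ * (S * X * Sᵀ) = S * X * Sᵀ - S * P * Sᵀ := by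
    calc S * P * Sᵀ * (S * X * Sᵀ) = S * (P * (Sᵀ * S * X)) * Sᵀ := by
          simp only [Matrix.mul_assoc]
      _ = _ := by rw [key, Matrix.mul_sub, Matrix.sub_mul]
  rw [Matrix.mul_sub, Matrix.sub_mul, Matrix.sub_mul, h2]
  simp only [Matrix.mul_neg, Matrix.mul_one, Matrix.one_mul]
  abel

/-- Matrix inversion lemma form: if `C − diag(b)` is invertible, then
`HᵀH` is invertible and `(HᵀH)⁻¹ = −α⁻¹I − α⁻¹ S (C − diag(b))⁻¹ Sᵀ`. -/
theorem HtH_inverse_identity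
    {M L N : ℕ} (α : ℝ) (hα : 0 < α) (Hb : Matrix (Fin M) (Fin L) ℝ)
    (S : Matrix (Fin N) (Fin L) ℝ)
    (hS01 : ∀ i j, S i j = 0 ∨ S i j = 1)
    (hSrow : ∀ i, ∃! j, S i j = 1)
    (hSdist : Function.Injective fun i => S i)
    (b : Fin L → ℝ) (hb : Sᵀ * S = Matrix.diagonal b)
    (hinv : IsUnit ((α⁻¹ • (Hbᵀ * Hb) + 1)⁻¹ - Matrix.diagonal b)) :
    IsUnit ((Hb * Sᵀ)ᵀ * (Hb * Sᵀ)) ∧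
    ((Hb * Sᵀ)ᵀ * (Hb * Sᵀ))⁻¹ =
      -(α⁻¹ • (1 : Matrix (Fin N) (Fin N) ℝ)) -
        α⁻¹ • (S * ((α⁻¹ • (Hbᵀ * Hb) + 1)⁻¹ - Matrix.diagonal b)⁻¹ * Sᵀ) := by
  have hSS := selection_mul_transpose S hS01 hSrow hSdist
  have hP : IsUnit (α⁻¹ • (Hbᵀ * Hb) + 1) := by
    have h1 : (Hbᵀ * Hb).PosSemidef := by
      simpa using Matrix.posSemidef_conjTranspose_mul_self Hb
    exact (Matrix.PosDef.posSemidef_add (h1.smul (inv_pos.2 hα).le) Matrix.PosDef.one).isUnit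
  rw [← hb] at hinv ⊢
  have core := compress_sub_one_mul _ S hP hinv
  have hH : (Hb * Sᵀ)ᵀ * (Hb * Sᵀ) = α • (S * (α⁻¹ • (Hbᵀ * Hb) + 1) * Sᵀ - 1) := by
    rw [Matrix.mul_add, Matrix.add_mul, Matrix.mul_one, hSS, add_sub_cancel_right,
      Matrix.mul_smul, Matrix.smul_mul, smul_smul, mul_inv_cancel₀ hα.ne', one_smul,
      Matrix.transpose_mul, Matrix.transpose_transpose]
    simp only [Matrix.mul_assoc]
  have hmul : (Hb * Sᵀ)ᵀ * (Hb * Sᵀ) *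
      (-(α⁻¹ • (1 : Matrix (Fin N) (Fin N) ℝ)) -
        α⁻¹ • (S * ((α⁻¹ • (Hbᵀ * Hb) + 1)⁻¹ - Sᵀ * S)⁻¹ * Sᵀ)) = 1 := by
    rw [hH, ← smul_neg, ← smul_sub, Matrix.smul_mul, Matrix.mul_smul, smul_smul,
      mul_inv_cancel₀ hα.ne', one_smul, core]
  exact ⟨IsUnit.of_mul_eq_one _ hmul, Matrix.inv_eq_right_inv hmul⟩
end

section
/- Let the true grid be a tree on buses {0,1,…,N} with reduced incidence matrix A₀ and positive conductance vector g₀, set G₀ := A₀ᵀ diag(g₀) A₀, and let C ⊆ {1,…,N} contain all leaf buses of this tree. Let Δ ∈ ℝ^{|C|×T} satisfy rank(Δ) = |C|, and let V := G₀⁻¹ I_C Δ. Then for any reduced incidence matrix A of any spanning tree on the bus set {0,1,…,N}, every row a_ℓᵀ of A satisfies a_ℓᵀ V ≠ 0ᵀ; equivalently, every diagonal entry of A V Vᵀ Aᵀ is strictly positive. -/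
/-!
Write `δ x` for the basis vector of bus `x` (zero at the substation), so that a row of any reduced
incidence matrix is `δ x - δ y` with `x ≠ y`. Any walk from `x` to `y` in the true tree carries a
flow `π` supported on its lines with `πᵀ A₀ = (δ x - δ y)ᵀ`; in particular `A₀` is invertible, and

  `(δ x - δ y)ᵀ G₀⁻¹ (δ u - δ v) = ∑ ℓ, π ℓ * π' ℓ / g₀ ℓ`

where `π'` is a flow from `u` to `v`. If the row annihilates `V`, then, `Δ` having full row rank,
the potential `φ = G₀⁻¹ (δ x - δ y)` vanishes on `C`, hence at the substation and at all leaves.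

The tree path from `x` to `y` extends to a maximal trail, with ends `u` and `v`
(`exists_extension`). A trail in a tree is a path, so each of `u`, `v` has degree one, i.e. is a
leaf or the substation (`neighborSet_ncard_eq_one`). Hence `φ u = φ v = 0` and the displayed sum
vanishes. But the added pieces share no line with the path from `x` to `y`, so `π' = π` wherever
`π ≠ 0`, and the sum equals `∑ ℓ, π ℓ ^ 2 / g₀ ℓ > 0`, a contradiction.
-/


open Matrix BigOperators
open scoped Classical

section Trails

variable {V : Type*} {G : SimpleGraph V}

/-- A trail extends backwards from its starting point until every edge at the new starting point
has been used. The number `k` bounds how many further edges can be added. -/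
lemma exists_extension_aux [Fintype G.edgeSet] (k : ℕ) :
    ∀ {x y : V} (p : G.Walk x y), p.IsTrail → G.edgeFinset.card ≤ p.length + k →
      ∃ (u : V) (q : G.Walk u x), (q.append p).IsTrail ∧
        ∀ z, G.Adj u z → s(u, z) ∈ (q.append p).edges := by
  induction k with
  | zero =>
    intro x y p hp hk
    refine ⟨x, .nil, by simpa using hp, ?_⟩
    intro z hz
    by_contra hcon
    have h1 : (SimpleGraph.Walk.cons hz.symm p).IsTrail := by
      rw [SimpleGraph.Walk.isTrail_cons, Sym2.eq_swap]
      exact ⟨hp, by simpa using hcon⟩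
    have h2 := h1.length_le_card_edgeFinset
    simp only [SimpleGraph.Walk.length_cons] at h2
    omega
  | succ k ih =>
    intro x y p hp hk
    by_cases hall : ∀ z, G.Adj x z → s(x, z) ∈ p.edges
    · exact ⟨x, .nil, by simpa using hp, by simpa using hall⟩
    · push Not at hall
      obtain ⟨z, hz, hzp⟩ := hall
      have h1 : (SimpleGraph.Walk.cons hz.symm p).IsTrail := by
        rw [SimpleGraph.Walk.isTrail_cons, Sym2.eq_swap]
        exact ⟨hp, hzp⟩
      obtain ⟨u, q, hq, hu⟩ := ih _ h1 (by simp only [SimpleGraph.Walk.length_cons]; omega)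
      refine ⟨u, q.concat hz.symm, ?_, ?_⟩
      · rwa [SimpleGraph.Walk.concat_append]
      · rwa [SimpleGraph.Walk.concat_append]

lemma exists_extension [Fintype G.edgeSet] {x y : V} (p : G.Walk x y) (hp : p.IsTrail) :
    ∃ (u : V) (q : G.Walk u x), (q.append p).IsTrail ∧
      ∀ z, G.Adj u z → s(u, z) ∈ (q.append p).edges :=
  exists_extension_aux G.edgeFinset.card p hp (by omega)

/-- If a nontrivial path uses every edge at its starting point, that vertex has degree one. -/
lemma neighborSet_ncard_eq_one {u v : V} (w : G.Walk u v) (hw : w.IsPath) (hl : 0 < w.length)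
    (hall : ∀ z, G.Adj u z → s(u, z) ∈ w.edges) : (G.neighborSet u).ncard = 1 := by
  cases w with
  | nil => simp at hl
  | @cons _ b _ h p =>
    rw [SimpleGraph.Walk.cons_isPath_iff] at hw
    rw [Set.ncard_eq_one]
    refine ⟨b, ?_⟩
    ext z
    simp only [SimpleGraph.mem_neighborSet, Set.mem_singleton_iff]
    constructor
    · intro hz
      have h1 := hall z hz
      rw [SimpleGraph.Walk.edges_cons, List.mem_cons] at h1
      rcases h1 with h1 | h1
      · exact Sym2.congr_right.mp h1
      · exact absurd (p.fst_mem_support_of_mem_edges h1) hw.2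
    · rintro rfl
      exact h

end Trails

namespace RadialGrid

variable {N : ℕ}

/-- The standard basis vector of bus `x` with the substation coordinate deleted; zero for the
substation. -/
noncomputable def busVec (x : Fin (N + 1)) : Fin N → ℝ := fun i => if i.succ = x then 1 else 0

lemma busVec_zero : busVec (0 : Fin (N + 1)) = 0 := by
  ext i
  simp [busVec, Fin.succ_ne_zero]

lemma busVec_succ (i : Fin N) : busVec i.succ = Pi.single i 1 := by
  ext j
  simp [busVec, Pi.single_apply]

lemma busVec_injective : Function.Injective (busVec (N := N)) := by
  intro x y h
  by_contra hne
  rcases Fin.eq_zero_or_eq_succ x with rfl | ⟨i, rfl⟩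
  · rcases Fin.eq_zero_or_eq_succ y with rfl | ⟨j, rfl⟩
    · exact hne rfl
    · have := congrFun h j
      simp [busVec, Fin.succ_ne_zero] at this
  · have := congrFun h i
    simp [busVec, hne] at this

lemma A_row (Γ : RadialGrid N) (ℓ : Fin N) :
    Γ.A ℓ = busVec (Γ.ep ℓ).1 - busVec (Γ.ep ℓ).2 := by
  ext i
  have := Γ.ne ℓ
  simp only [A, busVec, Pi.sub_apply]
  split_ifs <;> simp_all

/-- A walk from `x` to `y` carries a unit flow from `x` to `y` supported on its lines. -/
lemma exists_flow (Γ : RadialGrid N) {x y : Fin (N + 1)} (w : Γ.graph.Walk x y) :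
    ∃ π : Fin N → ℝ, π ᵥ* Γ.A = busVec x - busVec y ∧
      ∀ ℓ, π ℓ ≠ 0 → s((Γ.ep ℓ).1, (Γ.ep ℓ).2) ∈ w.edges := by
  induction w with
  | nil => exact ⟨0, by simp, by simp⟩
  | @cons u b v h p ih =>
    obtain ⟨π, h1, h2⟩ := ih
    obtain ⟨ℓ, hℓ⟩ : s(u, b) ∈ Set.range fun ℓ => s((Γ.ep ℓ).1, (Γ.ep ℓ).2) :=
      ((SimpleGraph.fromEdgeSet_adj _).mp h).1
    -- The sign of the new line's flow depends on its orientation.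
    obtain ⟨c, hc⟩ : ∃ c : ℝ, c • Γ.A ℓ = busVec u - busVec b := by
      rw [A_row]
      rcases Sym2.eq_iff.mp hℓ with ⟨ha, hb⟩ | ⟨ha, hb⟩
      · exact ⟨1, by rw [ha, hb, one_smul]⟩
      · exact ⟨-1, by rw [ha, hb, neg_one_smul, neg_sub]⟩
    refine ⟨Pi.single ℓ c + π, ?_, ?_⟩
    · rw [Matrix.add_vecMul, h1, Matrix.single_vecMul]
      change c • Γ.A ℓ + _ = _
      rw [hc]
      abel
    · intro m hm
      rw [SimpleGraph.Walk.edges_cons, List.mem_cons]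
      by_cases hml : m = ℓ
      · left; rw [hml]; exact hℓ
      · right
        apply h2
        simpa [hml] using hm

lemma isUnit_A (Γ : RadialGrid N) : IsUnit Γ.A := by
  -- The flows from the buses to the substation exhibit every basis vector in the row space.
  have h : ∀ i : Fin N, ∃ π : Fin N → ℝ, π ᵥ* Γ.A = Pi.single i 1 := by
    intro i
    obtain ⟨w⟩ := Γ.tree.connected.preconnected i.succ 0
    obtain ⟨π, hπ, -⟩ := Γ.exists_flow w
    exact ⟨π, by rw [hπ, busVec_zero, sub_zero, busVec_succ]⟩
  choose P hP using h
  have hmul : Matrix.of P * Γ.A = 1 := by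
    ext i j
    have := congrFun (hP i) j
    rw [Matrix.one_apply]
    simpa [Matrix.mul_apply, Matrix.vecMul, dotProduct, Pi.single_apply, eq_comm] using this
  exact IsUnit.of_mul_eq_one_right _ hmul

/-- Paths extend to paths between buses that are leaves or the substation; in terms of flows: the
flow `π` from `x` to `y` agrees on its support with a flow `π'` between two such buses. -/
lemma exists_maximal_flow (Γ : RadialGrid N) {x y : Fin (N + 1)} (hxy : x ≠ y) :
    ∃ (u v : Fin (N + 1)) (π π' : Fin N → ℝ),
      (u ≠ 0 → Γ.isLeaf u) ∧ (v ≠ 0 → Γ.isLeaf v) ∧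
      π ᵥ* Γ.A = busVec x - busVec y ∧ π' ᵥ* Γ.A = busVec u - busVec v ∧
      ∀ ℓ, π ℓ ≠ 0 → π' ℓ = π ℓ := by
  have hac : Γ.graph.IsAcyclic := Γ.tree.isAcyclic
  obtain ⟨p, hp, -⟩ := Γ.tree.existsUnique_path x y
  change Γ.graph.Walk x y at p
  have hlen : 0 < p.length := by
    rcases Nat.eq_zero_or_pos p.length with h | h
    · exact absurd (SimpleGraph.Walk.eq_of_length_eq_zero h) hxy
    · exact h
  obtain ⟨u, q₁, ht₁, hu⟩ := exists_extension p ((hac.isPath_iff_isTrail p).mp hp)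
  obtain ⟨v, q₂, ht₂, hv⟩ := exists_extension (q₁.append p).reverse ht₁.reverse
  have hW := (hac.isPath_iff_isTrail _).mpr ht₂
  have hWl : 0 < (q₂.append (q₁.append p).reverse).length := by
    simp only [SimpleGraph.Walk.length_append, SimpleGraph.Walk.length_reverse]
    omega
  obtain ⟨π, hπ, hπs⟩ := Γ.exists_flow p
  obtain ⟨π₁, hπ₁, hπs₁⟩ := Γ.exists_flow q₁
  obtain ⟨π₂, hπ₂, hπs₂⟩ := Γ.exists_flow q₂
  refine ⟨u, v, π, π₁ + π - π₂, fun h0 => ⟨h0, ?_⟩, fun h0 => ⟨h0, ?_⟩, hπ, ?_, ?_⟩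
  · refine neighborSet_ncard_eq_one (q₂.append (q₁.append p).reverse).reverse hW.reverse
      (by rwa [SimpleGraph.Walk.length_reverse]) ?_
    intro z hz
    have := hu z hz
    simp only [SimpleGraph.Walk.edges_append, SimpleGraph.Walk.edges_reverse, List.mem_append,
      List.mem_reverse] at this ⊢
    tauto
  · exact neighborSet_ncard_eq_one _ hW hWl hv
  · rw [Matrix.sub_vecMul, Matrix.add_vecMul, hπ, hπ₁, hπ₂]
    abel
  · intro ℓ hℓ
    have hmem := hπs ℓ hℓ
    have h1 : π₁ ℓ = 0 := by
      by_contra hne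
      exact ((SimpleGraph.Walk.isTrail_append _ _).mp ht₁).2.2 (hπs₁ ℓ hne) hmem
    have h2 : π₂ ℓ = 0 := by
      by_contra hne
      refine ((SimpleGraph.Walk.isTrail_append _ _).mp ht₂).2.2 (hπs₂ ℓ hne) ?_
      simp only [SimpleGraph.Walk.edges_append, SimpleGraph.Walk.edges_reverse, List.mem_append,
        List.mem_reverse]
      exact Or.inr hmem
    simp [h1, h2]

/-- Injecting a unit current at `x` and extracting it at `y` gives a potential that cannot vanish
at every leaf. -/
lemma exists_leaf_potential_ne_zero (Γ : RadialGrid N) {g : Fin N → ℝ} (hg : ∀ ℓ, 0 < g ℓ)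
    {x y : Fin (N + 1)} (hxy : x ≠ y) :
    ∃ i : Fin N, Γ.isLeaf i.succ ∧ ((busVec x - busVec y) ᵥ* (Γ.Gmat g)⁻¹) i ≠ 0 := by
  obtain ⟨u, v, π, π', hu, hv, hπ, hπ', heq⟩ := Γ.exists_maximal_flow hxy
  have hAdet : IsUnit Γ.A.det := (Matrix.isUnit_iff_isUnit_det _).mp Γ.isUnit_A
  have hGdet : IsUnit (Γ.Gmat g).det := by
    have hD : IsUnit (Matrix.diagonal g).det := by
      rw [Matrix.det_diagonal, isUnit_iff_ne_zero]
      exact Finset.prod_ne_zero_iff.mpr fun ℓ _ => (hg ℓ).ne'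
    rw [Gmat, Matrix.det_mul, Matrix.det_mul, Matrix.det_transpose]
    exact (hAdet.mul hD).mul hAdet
  by_contra! hcon
  set φ := (busVec x - busVec y) ᵥ* (Γ.Gmat g)⁻¹ with hφ
  -- Ohm law: cancel `A` in `φᵀ Aᵀ D A = πᵀ A`.
  have hohm : (φ ᵥ* Γ.Aᵀ) ᵥ* Matrix.diagonal g = π := by
    apply Matrix.vecMul_injective_of_isUnit Γ.isUnit_A
    change ((φ ᵥ* Γ.Aᵀ) ᵥ* Matrix.diagonal g) ᵥ* Γ.A = π ᵥ* Γ.A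
    rw [Matrix.vecMul_vecMul, Matrix.vecMul_vecMul, ← Matrix.mul_assoc]
    change φ ᵥ* Γ.Gmat g = _
    rw [hφ, Matrix.vecMul_vecMul, Matrix.nonsing_inv_mul _ hGdet, Matrix.vecMul_one, hπ]
  have hpt : ∀ ℓ, (Γ.A *ᵥ φ) ℓ * g ℓ = π ℓ := by
    intro ℓ
    have := congrFun hohm ℓ
    rwa [Matrix.vecMul_diagonal, Matrix.vecMul_transpose] at this
  have hend : ∀ z : Fin (N + 1), (z ≠ 0 → Γ.isLeaf z) → busVec z ⬝ᵥ φ = 0 := by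
    intro z hz
    rcases Fin.eq_zero_or_eq_succ z with rfl | ⟨i, rfl⟩
    · rw [busVec_zero, zero_dotProduct]
    · rw [busVec_succ, single_dotProduct, one_mul]
      exact hcon i (hz (Fin.succ_ne_zero i))
  have hzero : π' ⬝ᵥ (Γ.A *ᵥ φ) = 0 := by
    rw [Matrix.dotProduct_mulVec, hπ', sub_dotProduct, hend u hu, hend v hv, sub_zero]
  have hterm : ∀ ℓ, π' ℓ * (Γ.A *ᵥ φ) ℓ = (Γ.A *ᵥ φ) ℓ ^ 2 * g ℓ := by
    intro ℓ
    by_cases h : π ℓ = 0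
    · have : (Γ.A *ᵥ φ) ℓ = 0 := by
        have h1 := hpt ℓ
        rw [h] at h1
        exact (mul_eq_zero.mp h1).resolve_right (hg ℓ).ne'
      simp [this]
    · rw [heq ℓ h, ← hpt ℓ]
      ring
  have hall : ∀ ℓ, (Γ.A *ᵥ φ) ℓ ^ 2 * g ℓ = 0 := by
    have hsum : ∑ ℓ, (Γ.A *ᵥ φ) ℓ ^ 2 * g ℓ = 0 := by
      rw [← hzero, dotProduct]
      exact Finset.sum_congr rfl fun ℓ _ => (hterm ℓ).symm
    intro ℓ
    exact (Finset.sum_eq_zero_iff_of_nonneg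
      fun ℓ _ => mul_nonneg (sq_nonneg _) (hg ℓ).le).mp hsum ℓ (Finset.mem_univ ℓ)
  have hπ0 : π = 0 := by
    ext ℓ
    have h1 : (Γ.A *ᵥ φ) ℓ = 0 := by
      simpa [(hg ℓ).ne'] using hall ℓ
    rw [← hpt ℓ, h1, zero_mul, Pi.zero_apply]
  rw [hπ0, Matrix.zero_vecMul] at hπ
  exact hxy (busVec_injective (sub_eq_zero.mp hπ.symm))

end RadialGrid

lemma vecMul_injective_of_rank_eq_card {m n : Type*} [Fintype m] [Fintype n]
    (M : Matrix m n ℝ) (h : M.rank = Fintype.card m) : Function.Injective M.vecMul := by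
  rw [Matrix.vecMul_injective_iff, linearIndependent_iff_card_eq_finrank_span, ← h,
    Matrix.rank_eq_finrank_span_row, Set.finrank]

/-- With noiseless probing data `V = G₀⁻¹ I_C Δ` (all leaves probed,
`Δ` full row rank), every row `a_ℓᵀ` of any reduced incidence matrix `A` of any spanning
tree satisfies `a_ℓᵀ V ≠ 0ᵀ`; equivalently every diagonal entry of `A V Vᵀ Aᵀ` is
strictly positive. -/
theorem probing_rows_nonzero
    {N T : ℕ} (hN : 1 ≤ N) (Γ₀ : RadialGrid N) (g₀ : Fin N → ℝ) (hg₀ : ∀ ℓ, 0 < g₀ ℓ)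
    (C : Finset (Fin N)) (hleaf : ∀ n : Fin N, Γ₀.isLeaf n.succ → n ∈ C)
    (Δ : Matrix ↥C (Fin T) ℝ) (hΔ : Δ.rank = C.card)
    (Γ : RadialGrid N) :
    (∀ ℓ : Fin N, (Γ.A * ((Γ₀.Gmat g₀)⁻¹ * IC C * Δ)) ℓ ≠ 0) ∧
    (∀ ℓ : Fin N,
      0 < (Γ.A * ((Γ₀.Gmat g₀)⁻¹ * IC C * Δ) * ((Γ₀.Gmat g₀)⁻¹ * IC C * Δ)ᵀ * Γ.Aᵀ) ℓ ℓ) := by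
  have hrow : ∀ ℓ : Fin N, (Γ.A * ((Γ₀.Gmat g₀)⁻¹ * IC C * Δ)) ℓ ≠ 0 := by
    intro ℓ h0
    obtain ⟨i, hi, hne⟩ := Γ₀.exists_leaf_potential_ne_zero hg₀ (Γ.ne ℓ)
    rw [← Γ.A_row ℓ] at hne
    have h1 : ((Γ.A ℓ ᵥ* (Γ₀.Gmat g₀)⁻¹) ᵥ* IC C) ᵥ* Δ = 0 := by
      rw [Matrix.vecMul_vecMul, Matrix.vecMul_vecMul, ← Matrix.mul_assoc, ← h0]
      rfl
    have h2 : (Γ.A ℓ ᵥ* (Γ₀.Gmat g₀)⁻¹) ᵥ* IC C = 0 := by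
      apply vecMul_injective_of_rank_eq_card Δ (by rw [hΔ, Fintype.card_coe])
      change _ ᵥ* Δ = 0 ᵥ* Δ
      rw [h1, Matrix.zero_vecMul]
    apply hne
    have h3 := congrFun h2 ⟨i, hleaf i hi⟩
    simpa [Matrix.vecMul, dotProduct, IC] using h3
  refine ⟨hrow, fun ℓ => ?_⟩
  -- The diagonal entry is the squared Euclidean norm of the row.
  rw [Matrix.mul_assoc, ← Matrix.transpose_mul]
  change 0 < (Γ.A * ((Γ₀.Gmat g₀)⁻¹ * IC C * Δ)) ℓ ⬝ᵥ (Γ.A * ((Γ₀.Gmat g₀)⁻¹ * IC C * Δ)) ℓ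
  have hnn : 0 ≤ (Γ.A * ((Γ₀.Gmat g₀)⁻¹ * IC C * Δ)) ℓ ⬝ᵥ
      (Γ.A * ((Γ₀.Gmat g₀)⁻¹ * IC C * Δ)) ℓ :=
    Finset.sum_nonneg fun t _ => mul_self_nonneg _
  exact lt_of_le_of_ne hnn fun h => hrow ℓ (dotProduct_self_eq_zero.mp h.symm)
end
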